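/- The function δ2(τ) = -(θ1(0,τ)^4 + θ3(0,τ)^4)/8 is a modular form of weight 2 over the congruence subgroup Γ^0(2): it is holomorphic on the upper half-plane, holomorphic at the cusps, and satisfies δ2((aτ+b)/(cτ+d)) = (cτ+d)^2 δ2(τ) for every (a b; c d) ∈ Γ^0(2). -/

import Mathlib

open Complex Real Matrix Matrix.SpecialLinearGroup

local notation "SL(2,ℤ)" => Matrix.SpecialLinearGroup (Fin 2) ℤ
local notation "ℍ" => UpperHalfPlane

/-- The nome `q = e^{2πiτ}`. -/
noncomputable def qq (τ : ℂ) : ℂ := Complex.exp (2 * π * Complex.I * τ)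

/-- The half-nome `q^{1/2} = e^{πiτ}`. -/
noncomputable def qh (τ : ℂ) : ℂ := Complex.exp (π * Complex.I * τ)

/-- The Jacobi theta constant `θ₁(0,τ) = 2 q^{1/8} ∏_{j≥1} (1-q^j)(1+q^j)^2`. -/
noncomputable def theta1 (τ : ℂ) : ℂ :=
  2 * Complex.exp (π * Complex.I * τ / 4) *
    ∏' j : ℕ, ((1 - qq τ ^ (j + 1)) * (1 + qq τ ^ (j + 1)) ^ 2)

/-- The Jacobi theta constant `θ₃(0,τ) = ∏_{j≥1} (1-q^j)(1+q^{j-1/2})^2`. -/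
noncomputable def theta3 (τ : ℂ) : ℂ :=
  ∏' j : ℕ, ((1 - qq τ ^ (j + 1)) * (1 + qh τ ^ (2 * j + 1)) ^ 2)

/-- `δ₂(τ) = -(θ₁(0,τ)⁴ + θ₃(0,τ)⁴)/8`. -/
noncomputable def delta2 (τ : ℂ) : ℂ := -(theta1 τ ^ 4 + theta3 τ ^ 4) / 8

/-- `Γ^0(N)`: the congruence subgroup of `SL(2, ℤ)` of matrices whose upper right-hand entry
reduces to zero modulo `N`. -/
def GammaUpper0 (N : ℕ) : Subgroup SL(2,ℤ) where
  carrier := { g | (g 0 1 : ZMod N) = 0 }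
  one_mem' := by simp
  mul_mem' := by
    intro a b ha hb
    simp only [Set.mem_setOf_eq]
    have h := (Matrix.two_mul_expl a.1 b.1).2.1
    simp only [coe_matrix_coe, coe_mul, Int.coe_castRingHom, map_apply, Set.mem_setOf_eq] at *
    rw [h]
    simp [ha, hb]
  inv_mem' := by
    intro a ha
    simp only [Set.mem_setOf_eq]
    rw [SL2_inv_expl a]
    simp only [cons_val_zero, cons_val_one, head_cons, coe_matrix_coe,
      coe_mk, Int.coe_castRingHom, map_apply, Int.cast_neg, neg_eq_zero, Set.mem_setOf_eq] at *
    exact ha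


/-- The Euler product. -/
noncomputable def eulP (x : ℂ) : ℂ := ∏' n : ℕ, (1 - x ^ (n + 1))

/-- The odd Euler product. -/
noncomputable def eulQ (x : ℂ) : ℂ := ∏' n : ℕ, (1 - x ^ (2 * n + 1))

lemma norm_sq_lt {x : ℂ} (hx : ‖x‖ < 1) : ‖x ^ 2‖ < 1 := by
  rw [norm_pow]; exact pow_lt_one₀ (norm_nonneg _) hx (by norm_num)

lemma mult_odd {x : ℂ} (hx : ‖x‖ < 1) : Multipliable fun n : ℕ => 1 - x ^ (2 * n + 1) := by
  have : Summable fun n : ℕ => ‖-x ^ (2 * n + 1)‖ := by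
    have h := (summable_geometric_of_lt_one (norm_nonneg _) (norm_sq_lt hx)).mul_right ‖x‖
    refine h.congr fun n => ?_
    rw [norm_neg, norm_pow, norm_pow, pow_succ _ (2 * n), pow_mul]
  simpa [sub_eq_add_neg] using multipliable_one_add_of_summable this

lemma eulP_ne_zero {x : ℂ} (hx : ‖x‖ < 1) : eulP x ≠ 0 := by
  have hs : Summable fun n : ℕ => ‖-x ^ (n + 1)‖ := by
    simpa using (summable_nat_add_iff 1).mpr (summable_geometric_of_lt_one (norm_nonneg _) hx)
  have := tprod_one_add_ne_zero_of_summable (f := fun n : ℕ => -x ^ (n + 1)) ?_ hs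
  · simpa [eulP, sub_eq_add_neg] using this
  · intro n h
    have h1 : x ^ (n + 1) = 1 := by linear_combination -h
    have h2 : ‖x‖ ^ (n + 1) < 1 := pow_lt_one₀ (norm_nonneg _) hx (by omega)
    rw [← norm_pow, h1] at h2
    simp at h2

lemma eulP_split {x : ℂ} (hx : ‖x‖ < 1) : eulP x = eulQ x * eulP (x ^ 2) := by
  have h2 := ModularForm.multipliable_one_sub_pow (norm_sq_lt hx)
  have key : (fun k : ℕ => 1 - x ^ ((2 * k + 1) + 1)) = fun k : ℕ => 1 - (x ^ 2) ^ (k + 1) := by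
    funext k; rw [← pow_mul]; congr 2
  have := tprod_even_mul_odd (f := fun n : ℕ => 1 - x ^ (n + 1)) (mult_odd hx)
    (by rw [key]; exact h2)
  rw [key] at this
  exact this.symm

lemma eulQ_neg {x : ℂ} (hx : ‖x‖ < 1) : eulQ x * eulQ (-x) = eulQ (x ^ 2) := by
  unfold eulQ
  rw [← (mult_odd hx).tprod_mul (mult_odd (by simpa using hx))]
  refine tprod_congr fun n => ?_
  rw [Odd.neg_pow ⟨n, rfl⟩]
  ring

lemma tprod_plus {x : ℂ} (hx : ‖x‖ < 1) :
    eulP x * ∏' n : ℕ, (1 + x ^ (n + 1)) = eulP (x ^ 2) := by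
  have hm : Multipliable fun n : ℕ => 1 + x ^ (n + 1) := by
    apply multipliable_one_add_of_summable
    simpa using (summable_nat_add_iff 1).mpr (summable_geometric_of_lt_one (norm_nonneg _) hx)
  unfold eulP
  rw [← (ModularForm.multipliable_one_sub_pow hx).tprod_mul hm]
  refine tprod_congr fun n => ?_
  ring

lemma prod1_eq {x : ℂ} (hx : ‖x‖ < 1) :
    ∏' j : ℕ, ((1 - x ^ (j + 1)) * (1 + x ^ (j + 1)) ^ 2) = eulP (x ^ 2) ^ 2 / eulP x := by
  have hm : Multipliable fun n : ℕ => 1 + x ^ (n + 1) := by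
    apply multipliable_one_add_of_summable
    simpa using (summable_nat_add_iff 1).mpr (summable_geometric_of_lt_one (norm_nonneg _) hx)
  rw [(ModularForm.multipliable_one_sub_pow hx).tprod_mul (hm.pow 2), hm.tprod_pow,
    ← tprod_plus hx, eq_div_iff (eulP_ne_zero hx)]
  unfold eulP
  ring

lemma prod3_eq {x : ℂ} (hx : ‖x‖ < 1) :
    ∏' j : ℕ, ((1 - (x ^ 2) ^ (j + 1)) * (1 + x ^ (2 * j + 1)) ^ 2)
      = eulP (-x) ^ 2 / eulP (x ^ 2) := by
  have hx' : ‖-x‖ < 1 := by simpa using hx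
  have hm : Multipliable fun n : ℕ => 1 + x ^ (2 * n + 1) := by
    refine (mult_odd hx').congr fun n => ?_
    rw [Odd.neg_pow ⟨n, rfl⟩]; ring
  have hQ : ∏' n : ℕ, (1 + x ^ (2 * n + 1)) = eulQ (-x) := by
    refine tprod_congr fun n => ?_
    rw [Odd.neg_pow ⟨n, rfl⟩]; ring
  rw [(ModularForm.multipliable_one_sub_pow (norm_sq_lt hx)).tprod_mul (hm.pow 2), hm.tprod_pow,
    hQ, eulP_split hx', neg_sq, eq_div_iff (eulP_ne_zero (norm_sq_lt hx))]
  unfold eulP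
  ring

lemma eulP_triple {x : ℂ} (hx : ‖x‖ < 1) :
    eulP x * eulP (-x) * eulP ((x ^ 2) ^ 2) = eulP (x ^ 2) ^ 3 := by
  have hx' : ‖-x‖ < 1 := by simpa using hx
  have h1 := eulP_split hx
  have h2 := eulP_split hx'
  have h3 := eulP_split (norm_sq_lt hx)
  have h4 := eulQ_neg hx
  rw [neg_sq] at h2
  rw [h1, h2]
  linear_combination eulP (x ^ 2) ^ 2 * eulP ((x ^ 2) ^ 2) * h4 - eulP (x ^ 2) ^ 2 * h3

lemma norm_qh_lt (τ : ℍ) : ‖qh τ‖ < 1 := by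
  rw [qh, Complex.norm_exp, Real.exp_lt_one_iff]
  have := τ.im_pos
  have := Real.pi_pos
  simp
  positivity

lemma qh_sq (τ : ℂ) : qh τ ^ 2 = qq τ := by
  rw [qh, qq, ← Complex.exp_nat_mul]; congr 1; push_cast; ring

lemma norm_qq_lt (τ : ℍ) : ‖qq τ‖ < 1 := by
  rw [← qh_sq]; exact norm_sq_lt (norm_qh_lt τ)

/-- The second theta constant. -/
noncomputable def theta2 (τ : ℂ) : ℂ := eulP (qh τ) ^ 2 / eulP (qq τ)

lemma theta1_eq (τ : ℍ) : theta1 τ =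
    2 * Complex.exp (π * Complex.I * τ / 4) * (eulP (qq τ ^ 2) ^ 2 / eulP (qq τ)) := by
  rw [theta1, prod1_eq (norm_qq_lt τ)]

lemma theta3_eq (τ : ℍ) : theta3 τ = eulP (-qh τ) ^ 2 / eulP (qq τ) := by
  rw [theta3, ← qh_sq, prod3_eq (norm_qh_lt τ)]

lemma eta_eq (z : ℂ) : ModularForm.eta z = Complex.exp (π * Complex.I * z / 12) * eulP (qq z) := by
  unfold ModularForm.eta eulP ModularForm.eta_q Function.Periodic.qParam qq
  congr 1
  · congr 1; push_cast; ring
  · simp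

lemma qq_two (z : ℂ) : qq (2 * z) = qq z ^ 2 := by
  rw [qq, qq, ← Complex.exp_nat_mul]; congr 1; push_cast; ring

lemma qq_half (z : ℂ) : qq (z / 2) = qh z := by
  rw [qq, qh]; congr 1; ring

lemma theta1_eta (τ : ℍ) :
    theta1 τ * ModularForm.eta τ = 2 * ModularForm.eta (2 * τ) ^ 2 := by
  rw [theta1_eq, eta_eq, eta_eq, qq_two]
  have h := eulP_ne_zero (norm_qq_lt τ)
  have : Complex.exp (π * Complex.I * (2 * τ) / 12) ^ 2 =
    Complex.exp (π * Complex.I * τ / 4) * Complex.exp (π * Complex.I * τ / 12) := by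
    rw [← Complex.exp_nat_mul, ← Complex.exp_add]; congr 1; push_cast; ring
  rw [mul_pow, this]
  field_simp

lemma theta2_eta (τ : ℍ) :
    theta2 τ * ModularForm.eta τ = ModularForm.eta (τ / 2) ^ 2 := by
  rw [theta2, eta_eq, eta_eq, qq_half]
  have h := eulP_ne_zero (norm_qq_lt τ)
  have : Complex.exp (π * Complex.I * (τ / 2) / 12) ^ 2 =
    Complex.exp (π * Complex.I * τ / 12) := by
    rw [← Complex.exp_nat_mul]; congr 1; push_cast; ring
  rw [mul_pow, this]
  field_simp

lemma theta123 (τ : ℍ) : theta1 τ * theta2 τ * theta3 τ = 2 * ModularForm.eta τ ^ 3 := by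
  rw [theta1_eq, theta2, theta3_eq, eta_eq]
  have h := eulP_ne_zero (norm_qq_lt τ)
  have : Complex.exp (π * Complex.I * τ / 12) ^ 3 = Complex.exp (π * Complex.I * τ / 4) := by
    rw [← Complex.exp_nat_mul]; congr 1; push_cast; ring
  rw [mul_pow, this]
  have h3 := eulP_triple (norm_qh_lt τ)
  rw [qh_sq] at h3
  field_simp
  linear_combination (eulP (qh τ) * eulP (-qh τ) * eulP (qq τ ^ 2) + eulP (qq τ) ^ 3) * h3

lemma qh_add_one (z : ℂ) : qh (z + 1) = -qh z := by
  rw [qh, qh, mul_add, Complex.exp_add, mul_one, Complex.exp_pi_mul_I]; ring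

lemma qq_add_one (z : ℂ) : qq (z + 1) = qq z := by
  rw [← qh_sq, qh_add_one, neg_sq, qh_sq]

lemma theta1_T (τ : ℂ) : theta1 (τ + 1) ^ 4 = -theta1 τ ^ 4 := by
  have : Complex.exp (π * Complex.I * (τ + 1) / 4) ^ 4 =
      -Complex.exp (π * Complex.I * τ / 4) ^ 4 := by
    rw [← Complex.exp_nat_mul, ← Complex.exp_nat_mul,
      show ((4 : ℕ) : ℂ) * (π * Complex.I * (τ + 1) / 4)
        = (4 : ℕ) * (π * Complex.I * τ / 4) + π * Complex.I by push_cast; ring,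
      Complex.exp_add, Complex.exp_pi_mul_I]
    ring
  rw [theta1, theta1, qq_add_one]
  simp only [mul_pow, this]
  ring

lemma theta2_T (τ : ℍ) : theta2 (τ + 1) = theta3 τ := by
  rw [theta3_eq, theta2, qh_add_one, qq_add_one]

lemma theta3_T (τ : ℍ) : theta3 (τ + 1) = theta2 τ := by
  have : ((((1 : ℝ) +ᵥ τ : ℍ)) : ℂ) = τ + 1 := by
    simp [UpperHalfPlane.coe_vadd, add_comm]
  rw [← this, theta3_eq, this, theta2, qh_add_one, qq_add_one, neg_neg]

lemma csqrt_sq {z : ℂ} (hz : z ≠ 0) : Complex.sqrt z ^ 2 = z := by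
  rw [sqrt_eq_exp hz, ← Complex.exp_nat_mul]
  rw [show ((2 : ℕ) : ℂ) * (Complex.log z / 2) = Complex.log z by push_cast; ring,
    Complex.exp_log hz]

lemma eta_S_sq {z : ℂ} (hz : 0 < z.im) :
    ModularForm.eta (-1 / z) ^ 2 = -Complex.I * z * ModularForm.eta z ^ 2 := by
  have h := ModularForm.eta_comp_eq_csqrt_I_inv hz
  have hz0 : z ≠ 0 := by rintro rfl; simp at hz
  simp only [Function.comp_apply, Pi.smul_apply, Pi.mul_apply, smul_eq_mul] at h
  rw [h, mul_pow, mul_pow, inv_pow, csqrt_sq hz0, csqrt_sq Complex.I_ne_zero, Complex.inv_I]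
  ring

/-- The point `-1/τ`. -/
noncomputable def invPt (τ : ℍ) : ℍ := UpperHalfPlane.mk (-(τ : ℂ))⁻¹ τ.im_inv_neg_coe_pos

lemma invPt_coe (τ : ℍ) : ((invPt τ : ℍ) : ℂ) = -1 / (τ : ℂ) := by
  rw [invPt, UpperHalfPlane.coe_mk, neg_div, one_div, inv_neg]

lemma theta1_S (τ : ℍ) : theta1 (-1 / (τ : ℂ)) ^ 4 = -(τ : ℂ) ^ 2 * theta2 τ ^ 4 := by
  have h1 := theta1_eta (invPt τ)
  have h2 := theta2_eta τ
  have hη := ModularForm.eta_ne_zero τ.2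
  have hτ := τ.ne_zero
  have e1 := eta_S_sq τ.2
  have e2 := eta_S_sq (z := (τ : ℂ) / 2) (by simpa using τ.im_pos)
  rw [invPt_coe, show 2 * (-1 / (τ : ℂ)) = -1 / ((τ : ℂ) / 2) by field_simp, e2, ← h2] at h1
  have h4 : (theta1 (-1 / (τ : ℂ)) * ModularForm.eta (-1 / (τ : ℂ))) ^ 4 =
      (τ : ℂ) ^ 4 * theta2 τ ^ 4 * ModularForm.eta τ ^ 4 := by
    rw [h1]
    ring_nf
    rw [Complex.I_pow_four]
    ring
  have h5 : ModularForm.eta (-1 / (τ : ℂ)) ^ 4 = -(τ : ℂ) ^ 2 * ModularForm.eta τ ^ 4 := by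
    rw [show (4 : ℕ) = 2 * 2 by norm_num, pow_mul, e1]
    ring_nf
    rw [Complex.I_sq]
    ring
  rw [mul_pow, h5] at h4
  have h6 : (τ : ℂ) ^ 2 * ModularForm.eta τ ^ 4 ≠ 0 := by positivity
  apply mul_right_cancel₀ h6
  linear_combination -h4

lemma theta2_S (τ : ℍ) : theta2 (-1 / (τ : ℂ)) ^ 4 = -(τ : ℂ) ^ 2 * theta1 τ ^ 4 := by
  have h := theta1_S (invPt τ)
  have hτ := τ.ne_zero
  rw [invPt_coe, show -1 / (-1 / (τ : ℂ)) = τ by field_simp] at h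
  rw [h]
  field_simp

lemma theta1_ne_zero (τ : ℍ) : theta1 τ ≠ 0 := by
  intro h
  have := theta123 τ
  have h2 := ModularForm.eta_ne_zero τ.2
  simp [h] at this
  exact h2 this

lemma theta2_ne_zero (τ : ℍ) : theta2 τ ≠ 0 := by
  intro h
  have := theta123 τ
  have h2 := ModularForm.eta_ne_zero τ.2
  simp [h] at this
  exact h2 this

lemma theta3_S (τ : ℍ) : theta3 (-1 / (τ : ℂ)) ^ 4 = -(τ : ℂ) ^ 2 * theta3 τ ^ 4 := by
  have h := congrArg (· ^ 4) (theta123 (invPt τ))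
  have h' := congrArg (· ^ 4) (theta123 τ)
  have e1 := eta_S_sq τ.2
  have e6 : (ModularForm.eta (-1 / (τ : ℂ)) ^ 3) ^ 4 =
      -(τ : ℂ) ^ 6 * (ModularForm.eta τ ^ 3) ^ 4 := by
    rw [← pow_mul, show 3 * 4 = 2 * 6 by norm_num, pow_mul, e1]
    ring_nf
    rw [show Complex.I ^ 6 = -1 by rw [show 6 = 4 + 2 by norm_num, pow_add]; simp]
    ring
  simp only [invPt_coe, mul_pow, theta1_S, theta2_S, e6] at h h'
  have hne : (τ : ℂ) ^ 4 * (theta1 τ ^ 4 * theta2 τ ^ 4) ≠ 0 :=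
    mul_ne_zero (pow_ne_zero _ τ.ne_zero) (mul_ne_zero (pow_ne_zero _ (theta1_ne_zero τ))
      (pow_ne_zero _ (theta2_ne_zero τ)))
  apply mul_left_cancel₀ hne
  linear_combination h - (τ : ℂ) ^ 6 * (-1) * h'

open scoped ModularForm

/-- Fourth power of the first theta constant. -/
noncomputable def thA (τ : ℍ) : ℂ := theta1 τ ^ 4
/-- Fourth power of the second theta constant. -/
noncomputable def thB (τ : ℍ) : ℂ := theta2 τ ^ 4
/-- Minus the fourth power of the third theta constant. -/
noncomputable def thC (τ : ℍ) : ℂ := -theta3 τ ^ 4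

lemma slash_S_apply (f : ℍ → ℂ) (τ : ℍ) :
    (f ∣[(2 : ℤ)] ModularGroup.S) τ = f (invPt τ) * ((τ : ℂ) ^ 2)⁻¹ := by
  rw [ModularForm.SL_slash_apply, UpperHalfPlane.modular_S_smul, ModularGroup.denom_S, _root_.zpow_neg]
  rfl

lemma slash_T_apply (f : ℍ → ℂ) (τ : ℍ) :
    (f ∣[(2 : ℤ)] ModularGroup.T) τ = f ((1 : ℝ) +ᵥ τ) := by
  rw [ModularForm.SL_slash_apply, UpperHalfPlane.modular_T_smul]
  rw [ModularGroup.denom_apply]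
  simp [ModularGroup.T]

lemma vadd_one_coe (τ : ℍ) : ((((1 : ℝ) +ᵥ τ : ℍ)) : ℂ) = τ + 1 := by
  simp [UpperHalfPlane.coe_vadd, add_comm]

lemma thA_S : thA ∣[(2 : ℤ)] ModularGroup.S = -thB := by
  ext τ
  have := τ.ne_zero
  rw [slash_S_apply, thA, invPt_coe, theta1_S, Pi.neg_apply, thB]
  field_simp

lemma thB_S : thB ∣[(2 : ℤ)] ModularGroup.S = -thA := by
  ext τ
  have := τ.ne_zero
  rw [slash_S_apply, thB, invPt_coe, theta2_S, Pi.neg_apply, thA]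
  field_simp

lemma thC_S : thC ∣[(2 : ℤ)] ModularGroup.S = -thC := by
  ext τ
  have := τ.ne_zero
  rw [slash_S_apply, thC, invPt_coe, theta3_S, Pi.neg_apply, thC]
  field_simp

lemma thA_T : thA ∣[(2 : ℤ)] ModularGroup.T = -thA := by
  ext τ
  rw [slash_T_apply, thA, vadd_one_coe, theta1_T, Pi.neg_apply, thA]

lemma thB_T : thB ∣[(2 : ℤ)] ModularGroup.T = -thC := by
  ext τ
  rw [slash_T_apply, thB, vadd_one_coe, theta2_T, Pi.neg_apply, thC, neg_neg]

lemma thC_T : thC ∣[(2 : ℤ)] ModularGroup.T = -thB := by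
  ext τ
  rw [slash_T_apply, thC, vadd_one_coe, theta3_T, Pi.neg_apply, thB]

/-- Theta fourth powers indexed by nonzero vectors mod 2. -/
noncomputable def thF (a b : ZMod 2) : ℍ → ℂ :=
  if a = 0 then (if b = 0 then 0 else thA) else (if b = 0 then thB else thC)

/-- The sign character on matrices mod 2. -/
def sgn2 (a b c d : ZMod 2) : ℤ :=
  if (1 + a + d) * (b + c + b * c) = 0 then 1 else -1

lemma sgn2_mul : ∀ a b c d a' b' c' d' : ZMod 2, a * d - b * c = 1 → a' * d' - b' * c' = 1 →
    sgn2 (a * a' + b * c') (a * b' + b * d') (c * a' + d * c') (c * b' + d * d') =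
      sgn2 a b c d * sgn2 a' b' c' d' := by
  decide

lemma sgn2_inv : ∀ a b c d : ZMod 2, a * d - b * c = 1 →
    sgn2 d (-b) (-c) a * sgn2 a b c d = 1 := by
  decide

lemma det_mod2 (γ : SL(2,ℤ)) :
    ((γ 0 0 : ℤ) : ZMod 2) * ((γ 1 1 : ℤ) : ZMod 2)
      - ((γ 0 1 : ℤ) : ZMod 2) * ((γ 1 0 : ℤ) : ZMod 2) = 1 := by
  have := γ.2
  rw [Matrix.det_fin_two] at this
  exact_mod_cast congrArg (Int.cast : ℤ → ZMod 2) this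

/-- The sign of an integral matrix. -/
def sgnSL (γ : SL(2,ℤ)) : ℤ :=
  sgn2 ((γ 0 0 : ℤ) : ZMod 2) ((γ 0 1 : ℤ) : ZMod 2) ((γ 1 0 : ℤ) : ZMod 2) ((γ 1 1 : ℤ) : ZMod 2)

lemma sgnSL_mul (γ γ' : SL(2,ℤ)) : sgnSL (γ * γ') = sgnSL γ * sgnSL γ' := by
  rw [sgnSL, sgnSL, sgnSL, ← sgn2_mul _ _ _ _ _ _ _ _ (det_mod2 γ) (det_mod2 γ')]
  simp [Matrix.mul_apply, Fin.sum_univ_two]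

lemma zmod_two_cases (a : ZMod 2) : a = 0 ∨ a = 1 := by
  revert a; decide

lemma thF_S (a b : ZMod 2) : thF a b ∣[(2 : ℤ)] ModularGroup.S = -thF b a := by
  rcases zmod_two_cases a with rfl | rfl <;> rcases zmod_two_cases b with rfl | rfl <;>
    simp [thF, thA_S, thB_S, thC_S]

lemma thF_T (a b : ZMod 2) : thF a b ∣[(2 : ℤ)] ModularGroup.T = -thF a (a + b) := by
  rcases zmod_two_cases a with rfl | rfl <;> rcases zmod_two_cases b with rfl | rfl <;>
    simp [thF, thA_T, thB_T, thC_T, CharTwo.add_self_eq_zero]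

lemma thF_slash (γ : SL(2,ℤ)) : ∀ a b : ZMod 2, thF a b ∣[(2 : ℤ)] γ =
    sgnSL γ • thF (a * ((γ 0 0 : ℤ) : ZMod 2) + b * ((γ 1 0 : ℤ) : ZMod 2))
      (a * ((γ 0 1 : ℤ) : ZMod 2) + b * ((γ 1 1 : ℤ) : ZMod 2)) := by
  have : γ ∈ Subgroup.closure {ModularGroup.S, ModularGroup.T} := by
    simp [SpecialLinearGroup.SL2Z_generators]
  induction this using Subgroup.closure_induction with
  | one =>
    intro a b
    have : sgnSL 1 = 1 := by decide
    simp [this]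
  | mem x hx =>
    intro a b
    rcases hx with rfl | rfl
    · have : sgnSL ModularGroup.S = -1 := by decide
      rw [this, thF_S]
      simp [ModularGroup.S]
    · have : sgnSL ModularGroup.T = -1 := by decide
      rw [this, thF_T]
      simp [ModularGroup.T]
  | mul x y _ _ hx hy =>
    intro a b
    rw [SlashAction.slash_mul, hx, ModularForm.SL_smul_slash, hy, smul_smul, sgnSL_mul]
    congr 2 <;> simp [Matrix.mul_apply, Fin.sum_univ_two] <;> ring
  | inv x _ hx =>
    intro a b
    have hdet := det_mod2 x
    have h20 : (2 : ZMod 2) = 0 := by decide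
    have h := hx (a * ((x⁻¹ 0 0 : ℤ) : ZMod 2) + b * ((x⁻¹ 1 0 : ℤ) : ZMod 2))
      (a * ((x⁻¹ 0 1 : ℤ) : ZMod 2) + b * ((x⁻¹ 1 1 : ℤ) : ZMod 2))
    have hs : sgnSL x⁻¹ * sgnSL x = 1 := by
      rw [← sgnSL_mul, inv_mul_cancel]; decide
    have h2 := congrArg (fun f => sgnSL x⁻¹ • (f ∣[(2 : ℤ)] x⁻¹)) h
    simp only [← SlashAction.slash_mul, mul_inv_cancel, SlashAction.slash_one,
      ModularForm.SL_smul_slash, smul_smul, hs, one_smul] at h2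
    rw [h2]
    congr 2
    · simp [Matrix.SpecialLinearGroup.SL2_inv_expl]
      linear_combination (-a) * hdet + (-(a * ((x 1 0 : ℤ) : ZMod 2) * ((x 0 1 : ℤ) : ZMod 2))
        - b * ((x 1 0 : ℤ) : ZMod 2) * ((x 0 0 : ℤ) : ZMod 2)) * h20
    · simp [Matrix.SpecialLinearGroup.SL2_inv_expl]
      linear_combination (-b) * hdet + (-(b * ((x 1 0 : ℤ) : ZMod 2) * ((x 0 1 : ℤ) : ZMod 2))
        - a * ((x 1 1 : ℤ) : ZMod 2) * ((x 0 1 : ℤ) : ZMod 2)) * h20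

lemma tendsto_eulP : Filter.Tendsto eulP (nhds 0) (nhds 1) := by
  have := (ModularForm.differentiableOn_tprod_one_sub_pow.differentiableAt
    (Metric.isOpen_ball.mem_nhds (Metric.mem_ball_self one_pos))).continuousAt.tendsto
  have h0 : eulP 0 = 1 := by simp [eulP]
  rw [← h0]
  exact this

lemma tendsto_qh : Filter.Tendsto (fun τ : ℍ => qh τ) UpperHalfPlane.atImInfty (nhds 0) := by
  have := UpperHalfPlane.qParam_tendsto_atImInfty (h := 2) two_pos
  refine this.congr fun τ => ?_
  rw [Function.Periodic.qParam, qh]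
  congr 1; push_cast; ring

lemma tendsto_q8 : Filter.Tendsto (fun τ : ℍ => Complex.exp (π * Complex.I * τ / 4))
    UpperHalfPlane.atImInfty (nhds 0) := by
  have := UpperHalfPlane.qParam_tendsto_atImInfty (h := 8) (by norm_num)
  refine this.congr fun τ => ?_
  rw [Function.Periodic.qParam]
  congr 1; push_cast; ring

lemma tendsto_qq : Filter.Tendsto (fun τ : ℍ => qq τ) UpperHalfPlane.atImInfty (nhds 0) := by
  simpa [qh_sq] using tendsto_qh.pow 2

lemma bdd_thA : UpperHalfPlane.IsBoundedAtImInfty thA := by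
  have h1 : Filter.Tendsto (fun τ : ℍ => qq τ ^ 2) UpperHalfPlane.atImInfty (nhds 0) := by
    simpa using tendsto_qq.pow 2
  have := ((tendsto_q8.const_mul 2).mul (((tendsto_eulP.comp h1).pow 2).div
    (tendsto_eulP.comp tendsto_qq) one_ne_zero)).pow 4
  refine Filter.Tendsto.isBigO_one ℝ (this.congr fun τ => ?_)
  rw [thA, theta1_eq]
  rfl

lemma bdd_thB : UpperHalfPlane.IsBoundedAtImInfty thB := by
  have := (((tendsto_eulP.comp tendsto_qh).pow 2).div
    (tendsto_eulP.comp tendsto_qq) one_ne_zero).pow 4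
  refine Filter.Tendsto.isBigO_one ℝ (this.congr fun τ => ?_)
  rw [thB, theta2]
  rfl

lemma bdd_thC : UpperHalfPlane.IsBoundedAtImInfty thC := by
  have h1 : Filter.Tendsto (fun τ : ℍ => -qh τ) UpperHalfPlane.atImInfty (nhds 0) := by
    simpa using tendsto_qh.neg
  have := ((((tendsto_eulP.comp h1).pow 2).div
    (tendsto_eulP.comp tendsto_qq) one_ne_zero).pow 4).neg
  refine Filter.Tendsto.isBigO_one ℝ (this.congr fun τ => ?_)
  rw [thC, theta3_eq]
  rfl

lemma bdd_thF (a b : ZMod 2) : UpperHalfPlane.IsBoundedAtImInfty (thF a b) := by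
  unfold thF
  split_ifs
  · exact Filter.const_boundedAtFilter _ (0 : ℂ)
  · exact bdd_thA
  · exact bdd_thB
  · exact bdd_thC

lemma delta2_thF : (fun τ : ℍ => delta2 τ) = (1 / 8 : ℂ) • (thF 1 1 + -thF 0 1) := by
  ext τ
  simp [thF, thA, thC, delta2]
  ring

lemma eulP_diff {x : ℂ} (hx : ‖x‖ < 1) : DifferentiableAt ℂ eulP x :=
  ModularForm.differentiableOn_tprod_one_sub_pow.differentiableAt
    (Metric.isOpen_ball.mem_nhds (by simpa using hx))

lemma delta2_diff : DifferentiableOn ℂ delta2 {z | 0 < z.im} := by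
  have key : Set.EqOn delta2 (fun z : ℂ =>
      -((2 * Complex.exp (π * Complex.I * z / 4) * (eulP (qq z ^ 2) ^ 2 / eulP (qq z))) ^ 4 +
      (eulP (-qh z) ^ 2 / eulP (qq z)) ^ 4) / 8) {z | 0 < z.im} := by
    intro z hz
    have h1 := theta1_eq ⟨z, hz⟩
    have h3 := theta3_eq ⟨z, hz⟩
    simp only [delta2]
    rw [UpperHalfPlane.coe_mk] at h1 h3
    rw [h1, h3]
  refine DifferentiableOn.congr (fun z hz => DifferentiableAt.differentiableWithinAt ?_) key
  have nq := norm_qq_lt ⟨z, hz⟩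
  have nh := norm_qh_lt ⟨z, hz⟩
  rw [UpperHalfPlane.coe_mk] at nq nh
  have dq : DifferentiableAt ℂ qq z := by unfold qq; fun_prop
  have dh : DifferentiableAt ℂ qh z := by unfold qh; fun_prop
  have d1 : DifferentiableAt ℂ (fun z => eulP (qq z)) z := (eulP_diff nq).comp z dq
  have d2 : DifferentiableAt ℂ (fun z => eulP (qq z ^ 2)) z :=
    DifferentiableAt.comp z (g := eulP) (eulP_diff (norm_sq_lt nq)) (dq.pow 2)
  have d3 : DifferentiableAt ℂ (fun z => eulP (-qh z)) z :=
    DifferentiableAt.comp z (g := eulP) (eulP_diff (by simpa using nh)) dh.neg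
  have hne := eulP_ne_zero nq
  fun_prop (disch := assumption)

lemma delta2_slash (γ : SL(2,ℤ)) (hγ : γ ∈ GammaUpper0 2) :
    (fun τ : ℍ => delta2 τ) ∣[(2 : ℤ)] γ = fun τ : ℍ => delta2 τ := by
  have hb : ((γ 0 1 : ℤ) : ZMod 2) = 0 := hγ
  have hd := det_mod2 γ
  rw [delta2_thF, ModularForm.SL_smul_slash, SlashAction.add_slash, SlashAction.neg_slash,
    thF_slash, thF_slash, sgnSL, hb]
  rw [hb] at hd
  generalize ((γ 0 0 : ℤ) : ZMod 2) = a at *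
  generalize ((γ 1 0 : ℤ) : ZMod 2) = c at *
  generalize ((γ 1 1 : ℤ) : ZMod 2) = d at *
  have had : a = 1 ∧ d = 1 := by revert a d c; decide
  obtain ⟨rfl, rfl⟩ := had
  have hc : c = 0 ∨ c = 1 := by revert c; decide
  rcases hc with rfl | rfl
  · rw [show sgn2 1 0 0 1 = 1 by decide]
    simp
  · rw [show sgn2 1 0 1 1 = -1 by decide]
    simp [CharTwo.add_self_eq_zero]
    abel

lemma delta2_bdd (γ : SL(2,ℤ)) :
    UpperHalfPlane.IsBoundedAtImInfty ((fun τ : ℍ => delta2 τ) ∣[(2 : ℤ)] γ) := by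
  rw [delta2_thF, ModularForm.SL_smul_slash, SlashAction.add_slash, SlashAction.neg_slash,
    thF_slash, thF_slash]
  have h : ∀ (s : ℤ) (a b : ZMod 2), UpperHalfPlane.IsBoundedAtImInfty (s • thF a b) := by
    intro s a b
    have := (bdd_thF a b).smul (s : ℂ)
    have e : (s : ℂ) • thF a b = s • thF a b := by ext; simp
    rwa [e] at this
  exact ((h _ _ _).add (h _ _ _).neg).smul _

/-- `δ₂` is a modular form of weight `2` over `Γ^0(2)`: there is a modular form of weight `2`
over `Γ^0(2)` (holomorphic on `ℍ`, holomorphic at the cusps, transforming with weight `2` under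
`Γ^0(2)`) that coincides with `δ₂` on the upper half-plane. -/
theorem delta2_modular_form_weight_two_GammaUpper0_two :
    ∃ F : ModularForm (GammaUpper0 2) 2, ∀ τ : ℍ, F τ = delta2 (τ : ℂ) := by
  refine ⟨{ toFun := fun τ : ℍ => delta2 τ
            slash_action_eq' := ?_
            holo' := ?_
            bdd_at_cusps' := ?_ }, fun τ => rfl⟩
  · rintro _ ⟨γ, hγ, rfl⟩
    exact delta2_slash γ hγ
  · rw [UpperHalfPlane.mdifferentiable_iff]
    refine delta2_diff.congr fun z hz => ?_
    simp [UpperHalfPlane.ofComplex_apply_of_im_pos hz]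
  · intro c hc
    have hc' := hc.mono (ℋ := (mapGL ℝ : SL(2,ℤ) →* _).range) (by
      rintro _ ⟨γ, _, rfl⟩
      exact ⟨γ, rfl⟩)
    rw [OnePoint.isBoundedAt_iff_forall_SL2Z hc']
    intro γ _
    exact delta2_bdd γ
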